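/- Let A be the 7-gon in ℝ² given by the convex hull of the points (0, 2/5), (1,1), (−1,1), (2,2), (−2,2), (1,3), (−1,3). For any convex body B in ℝ², there exist an invertible affine map T : ℝ² → ℝ², a point c ∈ ℝ² and a real number λ with 1 ≤ λ ≤ 117/70 such that T(A) ⊆ B ⊆ c + λ • (T(A) − c). In particular, the Banach–Mazur radius of the family of planar convex bodies is at most 117/70 < 1.672. -/

import Mathlib

/-- A convex body in the plane: compact, convex, with nonempty interior. -/
def IsConvexBody (A : Set (ℝ × ℝ)) : Prop :=
  Convex ℝ A ∧ IsCompact A ∧ (interior A).Nonempty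

/-- The 7-gon with vertices (0, 2/5), (±1,1), (±2,2), (±1,3). -/
noncomputable def sevenGon : Set (ℝ × ℝ) :=
  convexHull ℝ {((0 : ℝ), (2/5 : ℝ)), (1, 1), (-1, 1), (2, 2), (-2, 2), (1, 3), (-1, 3)}

/-- Affine equivalences given by explicit coefficients. -/
lemma exists_aff (a b c d e f : ℝ) (h : a * d - b * c ≠ 0) :
    ∃ T : (ℝ × ℝ) ≃ᵃ[ℝ] (ℝ × ℝ), ∀ x y : ℝ, T (x, y) = (a * x + b * y + e, c * x + d * y + f) := by
  let L : (ℝ × ℝ) ≃ₗ[ℝ] (ℝ × ℝ) :=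
    { toFun := fun p => (a * p.1 + b * p.2, c * p.1 + d * p.2)
      invFun := fun p => ((d * p.1 - b * p.2) / (a * d - b * c), (a * p.2 - c * p.1) / (a * d - b * c))
      map_add' := by
        intro p q; ext <;> simp <;> ring
      map_smul' := by
        intro r p; ext <;> simp <;> ring
      left_inv := by
        intro p
        ext
        · simp only []; rw [div_eq_iff h]; ring
        · simp only []; rw [div_eq_iff h]; ring
      right_inv := by
        intro p
        ext
        · simp only []; rw [← mul_div_assoc, ← mul_div_assoc, ← add_div, div_eq_iff h]; ring
        · simp only []; rw [← mul_div_assoc, ← mul_div_assoc, ← add_div, div_eq_iff h]; ring }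
  refine ⟨L.toAffineEquiv.trans (AffineEquiv.constVAdd ℝ (ℝ × ℝ) (e, f)), ?_⟩
  intro x y
  simp [L, add_comm]

/-- Target property in convenient form. -/
def Good (B : Set (ℝ × ℝ)) : Prop :=
  ∃ (T : (ℝ × ℝ) ≃ᵃ[ℝ] (ℝ × ℝ)) (d : ℝ × ℝ), (∀ p ∈ sevenGon, T p ∈ B) ∧
    ∀ x ∈ B, ∃ p ∈ sevenGon, x = T (d + (117 / 70 : ℝ) • p)

lemma Good.final {B : Set (ℝ × ℝ)} (h : Good B) :
    ∃ (T : ℝ × ℝ ≃ᵃ[ℝ] ℝ × ℝ) (c : ℝ × ℝ) (l : ℝ),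
      1 ≤ l ∧ l ≤ 117 / 70 ∧
      T '' sevenGon ⊆ B ∧ B ⊆ AffineMap.homothety c l '' (T '' sevenGon) := by
  obtain ⟨T, d, h1, h2⟩ := h
  refine ⟨T, T ((-(70 / 47) : ℝ) • d), 117 / 70, by norm_num, le_rfl, ?_, ?_⟩
  · rintro _ ⟨p, hp, rfl⟩
    exact h1 p hp
  · intro x hx
    obtain ⟨p, hp, rfl⟩ := h2 x hx
    refine ⟨T p, ⟨p, hp, rfl⟩, ?_⟩
    rw [AffineMap.homothety_eq_lineMap]
    have := T.toAffineMap.apply_lineMap ((-(70 / 47) : ℝ) • d) p (117 / 70)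
    simp only [AffineEquiv.coe_toAffineMap] at this
    rw [← this]
    congr 1
    rw [AffineMap.lineMap_apply_module]
    ext <;> simp <;> ring

lemma Good.map {B : Set (ℝ × ℝ)} (Φ : (ℝ × ℝ) ≃ᵃ[ℝ] (ℝ × ℝ)) (h : Good {z | Φ z ∈ B}) :
    Good B := by
  obtain ⟨T, d, h1, h2⟩ := h
  refine ⟨T.trans Φ, d, fun p hp => h1 p hp, fun x hx => ?_⟩
  obtain ⟨p, hp, e⟩ := h2 (Φ.symm x) (by simpa using hx)
  refine ⟨p, hp, ?_⟩
  rw [AffineEquiv.trans_apply, ← e]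
  simp

lemma conv_mem {K : Set (ℝ × ℝ)} (hK : Convex ℝ K) {x y u v : ℝ} (hx : (x, y) ∈ K)
    (hu : (u, v) ∈ K) (s : ℝ) (h0 : 0 ≤ s) (h1 : s ≤ 1) {z w : ℝ}
    (hz : z = (1 - s) * x + s * u) (hw : w = (1 - s) * y + s * v) : (z, w) ∈ K := by
  have := hK hx hu (by linarith : 0 ≤ 1 - s) h0 (by ring)
  simpa [hz, hw] using this

lemma mem_seven {X Y : ℝ} (h1 : Y ≤ 3) (h2 : X + Y ≤ 4) (h3 : -X + Y ≤ 4) (h4 : X ≤ Y)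
    (h5 : -X ≤ Y) (h6 : 2 / 5 + 3 / 5 * X ≤ Y) (h7 : 2 / 5 - 3 / 5 * X ≤ Y) :
    (X, Y) ∈ sevenGon := by
  have hc : Convex ℝ sevenGon := convex_convexHull ℝ _
  have key : ∀ p ∈ ({((0 : ℝ), (2/5 : ℝ)), (1, 1), (-1, 1), (2, 2), (-2, 2), (1, 3), (-1, 3)} : Set (ℝ × ℝ)), p ∈ sevenGon :=
    fun p hp => subset_convexHull ℝ _ hp
  have k0 := key (0, 2/5) (by simp)
  have k1 := key (1, 1) (by simp)
  have k2 := key (-1, 1) (by simp)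
  have k3 := key (2, 2) (by simp)
  have k4 := key (-2, 2) (by simp)
  have k5 := key (1, 3) (by simp)
  have k6 := key (-1, 3) (by simp)
  have hor : ∀ g : ℝ, 0 ≤ g → (g, Y) ∈ sevenGon → (-g, Y) ∈ sevenGon → X ≤ g → -X ≤ g →
      (X, Y) ∈ sevenGon := by
    intro g hg hr hl ha hb
    rcases hg.eq_or_lt with h0 | h0
    · have : X = g := by linarith
      rw [this]; exact hr
    · refine conv_mem hc hl hr ((X + g) / (2 * g)) (div_nonneg (by linarith) (by linarith)) ?_ ?_ ?_
      · rw [div_le_one (by linarith)]; linarith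
      · field_simp; ring
      · ring
  rcases le_total 2 Y with hy | hy
  · refine hor (4 - Y) (by linarith) ?_ ?_ (by linarith) (by linarith)
    · exact conv_mem hc k3 k5 (Y - 2) (by linarith) (by linarith) (by ring) (by ring)
    · exact conv_mem hc k4 k6 (Y - 2) (by linarith) (by linarith) (by ring) (by ring)
  · rcases le_total 1 Y with hy1 | hy1
    · refine hor Y (by linarith) ?_ ?_ (by linarith) (by linarith)
      · exact conv_mem hc k1 k3 (Y - 1) (by linarith) (by linarith) (by ring) (by ring)
      · exact conv_mem hc k2 k4 (Y - 1) (by linarith) (by linarith) (by ring) (by ring)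
    · refine hor ((Y - 2/5) * (5/3)) (by linarith) ?_ ?_ (by linarith) (by linarith)
      · exact conv_mem hc k0 k1 ((Y - 2/5) * (5/3)) (by linarith) (by linarith) (by ring) (by ring)
      · exact conv_mem hc k0 k2 ((Y - 2/5) * (5/3)) (by linarith) (by linarith) (by ring) (by ring)

/-- Placement of the 7-gon in the hexagonal frame. -/
lemma place {K : Set (ℝ × ℝ)} (hK : Convex ℝ K) (μ e1 e2 g : ℝ) (hμ : 0 < μ)
    (v0 : (μ + e1, e2) ∈ K) (v1 : (e1, μ + e2) ∈ K) (v2 : (-μ + e1, μ + e2) ∈ K)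
    (v3 : (-μ + e1, e2) ∈ K) (v4 : (e1, -μ + e2) ∈ K) (v5 : (μ + e1, -μ + e2) ∈ K)
    (vp : (4 / 5 * μ + e1, 4 / 5 * μ + e2) ∈ K)
    (ho : ∀ x y : ℝ, (x, y) ∈ K → x ≤ 117 / 70 * μ + g ∧ y ≤ 117 / 70 * μ + g ∧
      -x ≤ 117 / 70 * μ - g ∧ -y ≤ 117 / 70 * μ - g ∧ -x - y ≤ 117 / 70 * μ - 2 * g ∧
      4 * x + y ≤ 4 * (117 / 70 * μ) + 5 * g ∧ x + 4 * y ≤ 4 * (117 / 70 * μ) + 5 * g) :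
    Good K := by
  obtain ⟨T, hT⟩ := exists_aff (μ / 2) (-μ / 2) (-μ / 2) (-μ / 2) (μ + e1) (μ + e2)
    (by have : 0 < μ * μ := by positivity
        nlinarith)
  set D1 : ℝ := (e2 - e1) / μ with hD1
  set D2 : ℝ := (e1 + e2 - 2 * g) / μ + 2 - 2 * (117 / 70) with hD2
  refine ⟨T, (D1, D2), ?_, ?_⟩
  · have : sevenGon ⊆ T ⁻¹' K := by
      refine convexHull_min ?_ (hK.affine_preimage T.toAffineMap)
      intro p hp
      simp only [Set.mem_insert_iff, Set.mem_singleton_iff] at hp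
      simp only [Set.mem_preimage]
      rcases hp with rfl | rfl | rfl | rfl | rfl | rfl | rfl <;> rw [hT]
      · convert vp using 2 <;> ring
      · convert v0 using 2 <;> ring
      · convert v1 using 2 <;> ring
      · convert v5 using 2 <;> ring
      · convert v2 using 2 <;> ring
      · convert v4 using 2 <;> ring
      · convert v3 using 2 <;> ring
    exact this
  · rintro ⟨x, y⟩ hx
    obtain ⟨h1, h2, h3, h4, h5, h6, h7⟩ := ho x y hx
    set ν : ℝ := 117 / 70 * μ with hν
    have hν0 : 0 < ν := by positivity
    refine ⟨((x - y) / ν, 2 - (x + y - 2 * g) / ν), ?_, ?_⟩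
    · have e : ∀ a b : ℝ, (a ≤ b * ν) → a / ν ≤ b := fun a b h => (div_le_iff₀ hν0).2 h
      have hA : (x - y) / ν = x / ν - y / ν := by ring
      have hB : (x + y - 2 * g) / ν = x / ν + y / ν - 2 * (g / ν) := by ring
      have q1 : x / ν - g / ν ≤ 1 := by rw [← sub_div]; apply e; linarith
      have q2 : y / ν - g / ν ≤ 1 := by rw [← sub_div]; apply e; linarith
      have q3 : (-x + g) / ν ≤ 1 := by apply e; linarith
      have q4 : (-y + g) / ν ≤ 1 := by apply e; linarith
      have q5 : (-x - y + 2 * g) / ν ≤ 1 := by apply e; linarith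
      have q6 : (4 * x + y - 5 * g) / ν ≤ 4 := by apply e; linarith
      have q7 : (x + 4 * y - 5 * g) / ν ≤ 4 := by apply e; linarith
      have r3 : (-x + g) / ν = -(x / ν) + g / ν := by ring
      have r4 : (-y + g) / ν = -(y / ν) + g / ν := by ring
      have r5 : (-x - y + 2 * g) / ν = -(x / ν) - y / ν + 2 * (g / ν) := by ring
      have r6 : (4 * x + y - 5 * g) / ν = 4 * (x / ν) + y / ν - 5 * (g / ν) := by ring
      have r7 : (x + 4 * y - 5 * g) / ν = x / ν + 4 * (y / ν) - 5 * (g / ν) := by ring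
      rw [r3] at q3; rw [r4] at q4; rw [r5] at q5; rw [r6] at q6; rw [r7] at q7
      rw [hA, hB]
      apply mem_seven <;> linarith
    · have : ((D1, D2) : ℝ × ℝ) + (117 / 70 : ℝ) • ((x - y) / ν, 2 - (x + y - 2 * g) / ν)
        = (D1 + 117 / 70 * ((x - y) / ν), D2 + 117 / 70 * (2 - (x + y - 2 * g) / ν)) := by
        ext <;> simp
      rw [this, hT, hD1, hD2, hν]
      ext
      · simp only []; field_simp; ring
      · simp only []; field_simp; ring

/-- There is a nontrivial supporting functional of `K` at `(p, q)`. -/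
def Supp (K : Set (ℝ × ℝ)) (p q : ℝ) : Prop :=
  ∃ α β : ℝ, (α ≠ 0 ∨ β ≠ 0) ∧ ∀ x y : ℝ, (x, y) ∈ K → α * x + β * y ≤ α * p + β * q

lemma supp0 {K : Set (ℝ × ℝ)} (h : Supp K 1 0) (v1 : (0, 1) ∈ K) (v5 : (1, -1) ∈ K) :
    ∃ a : ℝ, 0 ≤ a ∧ a ≤ 1 ∧ ∀ x y : ℝ, (x, y) ∈ K → x + a * y ≤ 1 := by
  obtain ⟨α, β, hn, h⟩ := h
  have e1 := h _ _ v1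
  have e2 := h _ _ v5
  have hα : 0 < α := by
    rcases lt_trichotomy α 0 with g | g | g
    · linarith
    · subst g
      have : β = 0 := by linarith
      simp_all
    · exact g
  refine ⟨β / α, div_nonneg (by linarith) hα.le, (div_le_one hα).2 (by linarith), ?_⟩
  intro x y hx
  have := h _ _ hx
  have e : x + β / α * y = (α * x + β * y) / α := by field_simp
  rw [e, div_le_one hα]; linarith

lemma supp1 {K : Set (ℝ × ℝ)} (h : Supp K 0 1) (v0 : (1, 0) ∈ K) (v2 : (-1, 1) ∈ K) :
    ∃ a : ℝ, 0 ≤ a ∧ a ≤ 1 ∧ ∀ x y : ℝ, (x, y) ∈ K → a * x + y ≤ 1 := by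
  obtain ⟨α, β, hn, h⟩ := h
  have e1 := h _ _ v0
  have e2 := h _ _ v2
  have hβ : 0 < β := by
    rcases lt_trichotomy β 0 with g | g | g
    · linarith
    · subst g
      have : α = 0 := by linarith
      simp_all
    · exact g
  refine ⟨α / β, div_nonneg (by linarith) hβ.le, (div_le_one hβ).2 (by linarith), ?_⟩
  intro x y hx
  have := h _ _ hx
  have e : α / β * x + y = (α * x + β * y) / β := by field_simp
  rw [e, div_le_one hβ]; linarith

lemma supp2 {K : Set (ℝ × ℝ)} (h : Supp K (-1) 1) (v1 : (0, 1) ∈ K) (v3 : (-1, 0) ∈ K) :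
    ∃ a : ℝ, 0 ≤ a ∧ a ≤ 1 ∧ ∀ x y : ℝ, (x, y) ∈ K → (a - 1) * x + a * y ≤ 1 := by
  obtain ⟨α, β, hn, h⟩ := h
  have e1 := h _ _ v1
  have e2 := h _ _ v3
  have hN : 0 < β - α := by
    rcases lt_trichotomy (β - α) 0 with g | g | g
    · linarith
    · have : β = 0 := by linarith
      have : α = 0 := by linarith
      simp_all
    · exact g
  refine ⟨β / (β - α), div_nonneg (by linarith) hN.le, (div_le_one hN).2 (by linarith), ?_⟩
  intro x y hx
  have := h _ _ hx
  have e : (β / (β - α) - 1) * x + β / (β - α) * y = (α * x + β * y) / (β - α) := by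
    field_simp; ring
  rw [e, div_le_one hN]; linarith

lemma supp5 {K : Set (ℝ × ℝ)} (h : Supp K 1 (-1)) (v0 : (1, 0) ∈ K) (v4 : (0, -1) ∈ K) :
    ∃ a : ℝ, 0 ≤ a ∧ a ≤ 1 ∧ ∀ x y : ℝ, (x, y) ∈ K → a * x + (a - 1) * y ≤ 1 := by
  obtain ⟨α, β, hn, h⟩ := h
  have e1 := h _ _ v0
  have e2 := h _ _ v4
  have hN : 0 < α - β := by
    rcases lt_trichotomy (α - β) 0 with g | g | g
    · linarith
    · have : β = 0 := by linarith
      have : α = 0 := by linarith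
      simp_all
    · exact g
  refine ⟨α / (α - β), div_nonneg (by linarith) hN.le, (div_le_one hN).2 (by linarith), ?_⟩
  intro x y hx
  have := h _ _ hx
  have e : α / (α - β) * x + (α / (α - β) - 1) * y = (α * x + β * y) / (α - β) := by
    field_simp; ring
  rw [e, div_le_one hN]; linarith

/-- A point in the triangle `0, P, (0,1)`. -/
lemma tri_mem {K : Set (ℝ × ℝ)} (hK : Convex ℝ K) (o : (0, 0) ∈ K) {u v px py : ℝ}
    (hu : (u, v) ∈ K) (hp : (px, py) ∈ K) {β γ z w : ℝ} (hβ : 0 ≤ β) (hγ : 0 ≤ γ)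
    (h : β + γ ≤ 1) (hz : z = β * px + γ * u) (hw : w = β * py + γ * v) : (z, w) ∈ K := by
  rcases (add_nonneg hβ hγ).eq_or_lt with h0 | h0
  · have b0 : β = 0 := by linarith
    have g0 : γ = 0 := by linarith
    subst b0 g0
    simpa [hz, hw] using o
  · have m : ((β * px + γ * u) / (β + γ), (β * py + γ * v) / (β + γ)) ∈ K := by
      refine conv_mem hK hp hu (γ / (β + γ)) (by positivity) ?_ ?_ ?_
      · rw [div_le_one h0]; linarith
      · field_simp; ring
      · field_simp; ring
    refine conv_mem hK o m (β + γ) h0.le h ?_ ?_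
    · rw [hz]; field_simp; ring
    · rw [hw]; field_simp; ring

/-- The apex of the 7-gon lies in `K`. -/
lemma apex_mem {K : Set (ℝ × ℝ)} (hK : Convex ℝ K) (o : (0, 0) ∈ K) (v0 : (1, 0) ∈ K)
    (v1 : (0, 1) ∈ K) {px py q1 q2 : ℝ} (hp : (px, py) ∈ K) (hx : 0 ≤ px) (hy : 0 ≤ py)
    (hq1 : 0 < q1) (hq2 : 0 < q2)
    (c1 : (1 - py) * q1 + px * q2 ≤ px) (c2 : py * q1 + (1 - px) * q2 ≤ py) (_hs : 0 < px + py) :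
    (q1, q2) ∈ K := by
  rcases le_total (q1 * py) (q2 * px) with h | h
  · have hx0 : 0 < px := by
      rcases hx.eq_or_lt with g | g
      · rw [← g] at h
        have : 0 < py := by linarith
        nlinarith
      · exact g
    refine tri_mem hK o v1 hp (β := q1 / px) (γ := q2 - q1 / px * py) (by positivity) ?_ ?_ ?_ ?_
    · have : q1 / px * py = q1 * py / px := by ring
      rw [this, sub_nonneg, div_le_iff₀ hx0]; exact h
    · have : q1 / px + (q2 - q1 / px * py) = ((1 - py) * q1 + px * q2) / px := by
        field_simp; ring
      rw [this, div_le_one hx0]; exact c1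
    · field_simp; ring
    · ring
  · have hy0 : 0 < py := by
      rcases hy.eq_or_lt with g | g
      · rw [← g] at h
        have : 0 < px := by linarith
        nlinarith
      · exact g
    refine tri_mem hK o v0 hp (β := q2 / py) (γ := q1 - q2 / py * px) (by positivity) ?_ ?_ ?_ ?_
    · have : q2 / py * px = q2 * px / py := by ring
      rw [this, sub_nonneg, div_le_iff₀ hy0]; exact h
    · have : q2 / py + (q1 - q2 / py * px) = (py * q1 + (1 - px) * q2) / py := by
        field_simp; ring
      rw [this, div_le_one hy0]; exact c2
    · ring
    · field_simp; ring

/-- Hexagonal norm. -/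
def HexBody (K : Set (ℝ × ℝ)) : Prop :=
  Convex ℝ K ∧ ((1, 0) ∈ K ∧ (0, 1) ∈ K ∧ (-1, 1) ∈ K ∧ (-1, 0) ∈ K ∧ (0, -1) ∈ K ∧ (1, -1) ∈ K) ∧
  (Supp K 1 0 ∧ Supp K 0 1 ∧ Supp K (-1) 1 ∧ Supp K (-1) 0 ∧ Supp K 0 (-1) ∧ Supp K 1 (-1))

set_option maxHeartbeats 1000000 in
lemma core {K : Set (ℝ × ℝ)} (H : HexBody K) {h px py : ℝ} (hp : (px, py) ∈ K)
    (hP : px + py = 1 + h)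
    (hM : ∀ x y : ℝ, (x, y) ∈ K → x + y ≤ 1 + h ∧ y ≤ 1 + h ∧ -x ≤ 1 + h ∧ -x - y ≤ 1 + h ∧
      -y ≤ 1 + h ∧ x ≤ 1 + h) : Good K := by
  obtain ⟨hK, ⟨v0, v1, v2, v3, v4, v5⟩, s0, s1, s2, s3, s4, s5⟩ := H
  obtain ⟨a0, a00, a01, f0⟩ := supp0 s0 v1 v5
  obtain ⟨a1, a10, a11, f1⟩ := supp1 s1 v0 v2
  obtain ⟨a2, a20, a21, f2⟩ := supp2 s2 v1 v3
  obtain ⟨a5, a50, a51, f5⟩ := supp5 s5 v0 v4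
  have o : ((0 : ℝ), (0 : ℝ)) ∈ K := conv_mem hK v0 v3 (1/2) (by norm_num) (by norm_num) (by norm_num) (by norm_num)
  have h0 : 0 ≤ h := by have := (hM _ _ v0).1; linarith
  have g0 := f0 _ _ hp
  have g1 := f1 _ _ hp
  have hpx : px ≤ 1 := by
    rcases h0.eq_or_lt with e | e
    · have := hM _ _ hp; linarith [this.2.2.2.2.2]
    · have : 0 < py := by
        by_contra hc
        nlinarith
      nlinarith
  have hpy : py ≤ 1 := by
    rcases h0.eq_or_lt with e | e
    · have := hM _ _ hp; linarith [this.2.1]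
    · have : 0 < px := by
        by_contra hc
        nlinarith
      nlinarith
  have b0 : h ≤ 1 - a0 := by nlinarith
  have b1 : h ≤ 1 - a1 := by nlinarith
  have hY : ∀ x y : ℝ, (x, y) ∈ K → y ≤ 2 - h := by
    intro x y hx
    by_contra hc
    have hc : 1 < y := by linarith
    have t1 := f1 _ _ hx
    have t2 := f2 _ _ hx
    have : -1 ≤ x := by
      by_contra hd
      have hd : x < -1 := by linarith
      rcases a20.eq_or_lt with e | e
      · rw [← e] at t2; linarith
      · nlinarith [mul_pos e (by linarith : 0 < y - 1), mul_nonneg (by linarith : 0 ≤ 1 - a2) (by linarith : 0 ≤ -1 - x)]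
    nlinarith
  have hX : ∀ x y : ℝ, (x, y) ∈ K → x ≤ 2 - h := by
    intro x y hx
    by_contra hc
    have hc : 1 < x := by linarith
    have t1 := f0 _ _ hx
    have t2 := f5 _ _ hx
    have : -1 ≤ y := by
      by_contra hd
      have hd : y < -1 := by linarith
      rcases a50.eq_or_lt with e | e
      · rw [← e] at t2; linarith
      · nlinarith [mul_pos e (by linarith : 0 < x - 1), mul_nonneg (by linarith : 0 ≤ 1 - a5) (by linarith : 0 ≤ -1 - y)]
    nlinarith
  have hS : ∀ x y : ℝ, (x, y) ∈ K → 4 * x + y ≤ 4 + h ∨ 4 * x + y ≤ 7 - 3 * h := by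
    intro x y hx
    rcases le_or_gt x 1 with c | c
    · left; linarith [(hM _ _ hx).1]
    · right
      have t0 := f0 _ _ hx
      have := hX _ _ hx
      have : x + y ≤ 1 := by
        rcases le_total y 0 with d | d
        · nlinarith
        · nlinarith [mul_nonneg a00 d]
      linarith
  have hS' : ∀ x y : ℝ, (x, y) ∈ K → x + 4 * y ≤ 4 + h ∨ x + 4 * y ≤ 7 - 3 * h := by
    intro x y hx
    rcases le_or_gt y 1 with c | c
    · left; linarith [(hM _ _ hx).1]
    · right
      have t0 := f1 _ _ hx
      have := hY _ _ hx
      have : x + y ≤ 1 := by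
        rcases le_total x 0 with d | d
        · nlinarith
        · nlinarith [mul_nonneg a10 d]
      linarith
  clear f0 f1 f2 f5 s0 s1 s2 s3 s4 s5 g0 g1 b0 b1
  rcases le_total (3/4) h with hh | hh
  · refine place hK 1 0 0 (-1/3) one_pos (by simpa using v0) (by simpa using v1) (by simpa using v2)
      (by simpa using v3) (by simpa using v4) (by simpa using v5) ?_ ?_
    · refine apex_mem hK o v0 v1 hp (by linarith) (by linarith) (by norm_num) (by norm_num) ?_ ?_ (by linarith)
      · linarith
      · linarith
    · intro x y hx
      obtain ⟨m1, m2, m3, m4, m5, m6⟩ := hM _ _ hx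
      have := hX _ _ hx
      have := hY _ _ hx
      refine ⟨by linarith, by linarith, by linarith, by linarith, by linarith, ?_, ?_⟩
      · rcases hS _ _ hx with t | t <;> linarith
      · rcases hS' _ _ hx with t | t <;> linarith
  · -- `h ≤ 3/4`
    have hs : 0 < 1 - h := by linarith
    have hd : 0 < 13/10 - 2/5 * h := by linarith
    set μ : ℝ := 1 / (13/10 - 2/5 * h) with hμ
    have hμ0 : 0 < μ := by positivity
    have hμe : μ * (13/10 - 2/5 * h) = 1 := by rw [hμ]; exact one_div_mul_cancel hd.ne'
    have hμ1 : μ ≤ 1 := by rw [hμ, div_le_one hd]; linarith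
    set σ : ℝ := (1 - px) / (1 - h) with hσ
    have hσe : σ * (1 - h) = 1 - px := by rw [hσ]; field_simp
    have hσ0 : 0 ≤ σ := div_nonneg (by linarith) hs.le
    have hσ1 : σ ≤ 1 := by rw [hσ, div_le_one hs]; linarith
    have q : (-σ, -(1 - σ)) ∈ K :=
      conv_mem hK v4 v3 σ hσ0 hσ1 (by ring) (by ring)
    have sh : ∀ a b : ℝ, (a, b) ∈ K → (μ * a + -(1 - μ) * σ, μ * b + -(1 - μ) * (1 - σ)) ∈ K := by
      intro a b hab
      exact conv_mem hK hab q (1 - μ) (by linarith) (by linarith) (by ring) (by ring)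
    have epx : px = 1 - σ * (1 - h) := by linarith
    have epy : py = 1 - (1 - σ) * (1 - h) := by linarith
    have hlow : 10/13 ≤ μ := by
      rw [hμ, le_div_iff₀ hd]; linarith
    have inner : ∀ τ : ℝ, 0 ≤ τ → τ ≤ 1 →
        (1 - τ) * (1 - h) * (4/5 * μ - (1 - μ) * τ) + (1 - τ * (1 - h)) * (4/5 * μ - (1 - μ) * (1 - τ))
          ≤ 1 - τ * (1 - h) := by
      intro τ t0 t1
      have key : (13/10 - 2/5 * h) * ((1 - τ) * (1 - h) * (4/5 * μ - (1 - μ) * τ) + (1 - τ * (1 - h)) * (4/5 * μ - (1 - μ) * (1 - τ)))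
          ≤ (13/10 - 2/5 * h) * (1 - τ * (1 - h)) := by
        have e : (13/10 - 2/5 * h) * ((1 - τ) * (1 - h) * (4/5 * μ - (1 - μ) * τ) + (1 - τ * (1 - h)) * (4/5 * μ - (1 - μ) * (1 - τ)))
          = 4/5 * (μ * (13/10 - 2/5 * h)) * ((1 - τ) * (1 - h) + (1 - τ * (1 - h))) - ((13/10 - 2/5 * h) - μ * (13/10 - 2/5 * h)) * (1 - τ) := by
          ring
        rw [e, hμe]
        nlinarith [mul_nonneg t0 (mul_nonneg h0 hs.le), mul_nonneg t0 h0, mul_nonneg t0 hs.le]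
      exact le_of_mul_le_mul_left key hd
    have vp : (4/5 * μ + -(1 - μ) * σ, 4/5 * μ + -(1 - μ) * (1 - σ)) ∈ K := by
      refine apex_mem hK o v0 v1 hp (by linarith) (by linarith) (by nlinarith) (by nlinarith) ?_ ?_ (by linarith)
      · rw [epx, epy]
        have := inner σ hσ0 hσ1
        linarith
      · rw [epx, epy]
        have := inner (1 - σ) (by linarith) (by linarith)
        ring_nf at this ⊢
        linarith
    have V0 := sh _ _ v0
    have V1 := sh _ _ v1
    have V2 := sh _ _ v2
    have V3 := sh _ _ v3
    have V4 := sh _ _ v4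
    have V5 := sh _ _ v5
    simp only [mul_one, mul_zero, mul_neg, zero_add] at V0 V1 V2 V3 V4 V5
    rcases le_total h (1/2) with hl | hl
    · have hν : 1 + h ≤ 117/70 * μ := by
        rw [hμ, ← mul_div_assoc, le_div_iff₀ hd]; nlinarith [sq_nonneg (h - 1/2)]
      refine place hK μ (-(1 - μ) * σ) (-(1 - μ) * (1 - σ)) 0 hμ0 V0 V1 V2 V3 V4 V5 vp ?_
      intro x y hx
      obtain ⟨m1, m2, m3, m4, m5, m6⟩ := hM _ _ hx
      refine ⟨by linarith, by linarith, by linarith, by linarith, by linarith, by linarith, by linarith⟩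
    · have hν : 3/2 ≤ 117/70 * μ := by
        rw [hμ, ← mul_div_assoc, le_div_iff₀ hd]; linarith
      refine place hK μ (-(1 - μ) * σ) (-(1 - μ) * (1 - σ)) ((1 - 2 * h) / 2) hμ0 V0 V1 V2 V3 V4 V5 vp ?_
      intro x y hx
      obtain ⟨m1, m2, m3, m4, m5, m6⟩ := hM _ _ hx
      have := hX _ _ hx
      have := hY _ _ hx
      refine ⟨by linarith, by linarith, by linarith, by linarith, by linarith, ?_, ?_⟩
      · rcases hS _ _ hx with t | t <;> linarith
      · rcases hS' _ _ hx with t | t <;> linarith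

def Bd (K : Set (ℝ × ℝ)) (h : ℝ) : Prop :=
  ∀ x y, (x, y) ∈ K → x + y ≤ 1 + h ∧ y ≤ 1 + h ∧ -x ≤ 1 + h ∧ -x - y ≤ 1 + h ∧ -y ≤ 1 + h ∧ x ≤ 1 + h

def rotK (K : Set (ℝ × ℝ)) : Set (ℝ × ℝ) := {z | (-z.2, z.1 + z.2) ∈ K}

lemma rotK_supp {K : Set (ℝ × ℝ)} {p q p' q' : ℝ} (h : Supp K p' q') (hp : p' = -q)
    (hq : q' = p + q) : Supp (rotK K) p q := by
  obtain ⟨α, β, h0, h⟩ := h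
  refine ⟨β, β - α, ?_, ?_⟩
  · by_contra hc
    push Not at hc
    rcases h0 with h0 | h0
    · apply h0; linarith [hc.1, hc.2]
    · exact h0 hc.1
  · intro x y hxy
    have := h _ _ hxy
    subst hp hq
    simp only at this
    linarith

lemma rotK_hex {K : Set (ℝ × ℝ)} (H : HexBody K) : HexBody (rotK K) := by
  obtain ⟨hc, ⟨v0, v1, v2, v3, v4, v5⟩, ⟨s0, s1, s2, s3, s4, s5⟩⟩ := H
  refine ⟨?_, ⟨?_, ?_, ?_, ?_, ?_, ?_⟩, ⟨?_, ?_, ?_, ?_, ?_, ?_⟩⟩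
  · rintro ⟨x, y⟩ hx ⟨u, v⟩ hu a b ha hb hab
    have := hc hx hu ha hb hab
    simp only [rotK, Set.mem_ofPred_eq] at *
    convert this using 1
    ext <;> simp <;> ring
  · simpa [rotK] using v1
  · simpa [rotK] using v2
  · simpa [rotK] using v3
  · simpa [rotK] using v4
  · simpa [rotK] using v5
  · simpa [rotK] using v0
  · exact rotK_supp s1 (by norm_num) (by norm_num)
  · exact rotK_supp s2 (by norm_num) (by norm_num)
  · exact rotK_supp s3 (by norm_num) (by norm_num)
  · exact rotK_supp s4 (by norm_num) (by norm_num)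
  · exact rotK_supp s5 (by norm_num) (by norm_num)
  · exact rotK_supp s0 (by norm_num) (by norm_num)

lemma rotK_bd {K : Set (ℝ × ℝ)} {h : ℝ} (H : Bd K h) : Bd (rotK K) h := by
  intro x y hxy
  have := H _ _ hxy
  simp only at this
  refine ⟨?_, ?_, ?_, ?_, ?_, ?_⟩ <;> linarith [this.1, this.2.1, this.2.2.1, this.2.2.2.1, this.2.2.2.2.1, this.2.2.2.2.2]

lemma rotK_good {K : Set (ℝ × ℝ)} (H : Good (rotK K)) : Good K := by
  obtain ⟨T, hT⟩ := exists_aff 0 (-1) 1 1 0 0 (by norm_num)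
  apply Good.map T
  convert H using 1
  ext ⟨x, y⟩
  simp only [rotK, Set.mem_ofPred_eq, hT]
  constructor <;> intro h <;> convert h using 2 <;> ring

lemma rotK_pt {K : Set (ℝ × ℝ)} {x y : ℝ} (h : (x, y) ∈ K) : (x + y, -x) ∈ rotK K := by
  simp only [rotK, Set.mem_ofPred_eq]
  convert h using 2 <;> ring

lemma core1 {K : Set (ℝ × ℝ)} (H : HexBody K) {h x y : ℝ} (hp : (x, y) ∈ K) (hM : Bd K h)
    (hP : y = 1 + h) : Good K :=
  rotK_good (core (rotK_hex H) (rotK_pt hp) (by linarith) (rotK_bd hM))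

lemma core2 {K : Set (ℝ × ℝ)} (H : HexBody K) {h x y : ℝ} (hp : (x, y) ∈ K) (hM : Bd K h)
    (hP : -x = 1 + h) : Good K :=
  rotK_good (core1 (rotK_hex H) (rotK_pt hp) (rotK_bd hM) (by linarith))

lemma core3 {K : Set (ℝ × ℝ)} (H : HexBody K) {h x y : ℝ} (hp : (x, y) ∈ K) (hM : Bd K h)
    (hP : -x - y = 1 + h) : Good K :=
  rotK_good (core2 (rotK_hex H) (rotK_pt hp) (rotK_bd hM) (by linarith))

lemma core4 {K : Set (ℝ × ℝ)} (H : HexBody K) {h x y : ℝ} (hp : (x, y) ∈ K) (hM : Bd K h)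
    (hP : -y = 1 + h) : Good K :=
  rotK_good (core3 (rotK_hex H) (rotK_pt hp) (rotK_bd hM) (by linarith))

lemma core5 {K : Set (ℝ × ℝ)} (H : HexBody K) {h x y : ℝ} (hp : (x, y) ∈ K) (hM : Bd K h)
    (hP : x = 1 + h) : Good K :=
  rotK_good (core4 (rotK_hex H) (rotK_pt hp) (rotK_bd hM) (by linarith))

lemma hex_good {K : Set (ℝ × ℝ)} (H : HexBody K) (hK : IsCompact K) : Good K := by
  let N : ℝ × ℝ → ℝ := fun z => max (z.1 + z.2) (max z.2 (max (-z.1) (max (-z.1 - z.2) (max (-z.2) z.1))))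
  have hN : Continuous N := by fun_prop
  obtain ⟨⟨px, py⟩, hp, hmax⟩ := hK.exists_isMaxOn ⟨_, H.2.1.1⟩ hN.continuousOn
  have hM : Bd K (N (px, py) - 1) := by
    intro x y hxy
    have h1 : N (x, y) ≤ N (px, py) := hmax hxy
    have h2 : max (x + y) (max y (max (-x) (max (-x - y) (max (-y) x)))) ≤ N (px, py) := h1
    simp only [max_le_iff] at h2
    refine ⟨?_, ?_, ?_, ?_, ?_, ?_⟩ <;> linarith [h2.1, h2.2.1, h2.2.2.1, h2.2.2.2.1, h2.2.2.2.2.1, h2.2.2.2.2.2]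
  have hc : N (px, py) = max (px + py) (max py (max (-px) (max (-px - py) (max (-py) px)))) := rfl
  set m := N (px, py)
  rcases max_choice (px + py) (max py (max (-px) (max (-px - py) (max (-py) px)))) with h | h
  · exact core H hp (by linarith) hM
  rw [h] at hc
  rcases max_choice py (max (-px) (max (-px - py) (max (-py) px))) with h | h
  · exact core1 H hp hM (by linarith)
  rw [h] at hc
  rcases max_choice (-px) (max (-px - py) (max (-py) px)) with h | h
  · exact core2 H hp hM (by linarith)
  rw [h] at hc
  rcases max_choice (-px - py) (max (-py) px) with h | h
  · exact core3 H hp hM (by linarith)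
  rw [h] at hc
  rcases max_choice (-py) px with h | h
  · exact core4 H hp hM (by linarith)
  · exact core5 H hp hM (by linarith)

lemma supp_of_notMem {K : Set (ℝ × ℝ)} (hK : Convex ℝ K) (hi : (interior K).Nonempty) {p q : ℝ}
    (h : (p, q) ∉ interior K) : Supp K p q := by
  obtain ⟨f, hf⟩ := geometric_hahn_banach_open_point hK.interior isOpen_interior h
  have hlin : ∀ x y : ℝ, f (x, y) = f (1, 0) * x + f (0, 1) * y := by
    intro x y
    have : ((x, y) : ℝ × ℝ) = x • ((1 : ℝ), (0 : ℝ)) + y • ((0 : ℝ), (1 : ℝ)) := by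
      ext <;> simp
    rw [this, map_add, map_smul, map_smul]
    simp [mul_comm]
  refine ⟨f (1, 0), f (0, 1), ?_, ?_⟩
  · by_contra hc
    push Not at hc
    obtain ⟨⟨x, y⟩, hw⟩ := hi
    have := hf _ hw
    rw [hlin, hlin p q, hc.1, hc.2] at this
    linarith
  · intro x y hxy
    rw [← hlin, ← hlin]
    have h1 : (x, y) ∈ closure (interior K) := by
      rw [hK.closure_interior_eq_closure_of_nonempty_interior hi]
      exact subset_closure hxy
    have h2 : closure (interior K) ⊆ {z | f z ≤ f (p, q)} :=
      closure_minimal (fun z hz => (hf z hz).le) (isClosed_le f.continuous continuous_const)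
    exact h2 h1

lemma mid_interior {K : Set (ℝ × ℝ)} (hK : Convex ℝ K) (hi : (interior K).Nonempty)
    {x p q y u v u' v' : ℝ} (h1 : (x, y) ∈ K) (h2 : (q, y) ∈ K) (hxp : x < p) (hpq : p < q)
    (hu : (u, v) ∈ K) (hv : y < v) (hu' : (u', v') ∈ K) (hv' : v' < y) : (p, y) ∈ interior K := by
  by_contra h
  obtain ⟨α, β, h0, hs⟩ := supp_of_notMem hK hi h
  have e1 := hs _ _ h1
  have e2 := hs _ _ h2
  have e3 := hs _ _ hu
  have e4 := hs _ _ hu'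
  have ha : α = 0 := by
    rcases lt_trichotomy α 0 with h | h | h
    · nlinarith
    · exact h
    · nlinarith
  have hb : β = 0 := by
    subst ha
    rcases lt_trichotomy β 0 with h | h | h
    · nlinarith
    · exact h
    · nlinarith
  rcases h0 with h0 | h0
  · exact h0 ha
  · exact h0 hb

lemma int_mix {K : Set (ℝ × ℝ)} (hK : Convex ℝ K) {x y u v : ℝ} (hx : (x, y) ∈ K)
    (hu : (u, v) ∈ interior K) (s : ℝ) (h0 : 0 < s) (h1 : s ≤ 1) :
    ((1 - s) * x + s * u, (1 - s) * y + s * v) ∈ interior K := by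
  have := hK.combo_self_interior_mem_interior hx hu (by linarith : 0 ≤ 1 - s) h0 (by ring)
  simpa using this

lemma slater {K : Set (ℝ × ℝ)} (hK : Convex ℝ K) (hi : (interior K).Nonempty) {p q L t : ℝ}
    (h1 : (p, q) ∈ K) (h2 : (p + L, q) ∈ K) (ht : 0 < t) (hL : t < L) :
    ∃ z w, (z, w) ∈ interior K ∧ (z + t, w) ∈ interior K := by
  obtain ⟨⟨u, v⟩, hw⟩ := hi
  have hL0 : 0 < L := by linarith
  have hd : t / L < 1 := by rw [div_lt_one hL0]; exact hL
  have hd0 : 0 < t / L := by positivity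
  have e1 := int_mix hK h1 hw (1 - t / L) (by linarith) (by linarith)
  have e2 := int_mix hK h2 hw (1 - t / L) (by linarith) (by linarith)
  refine ⟨_, _, e1, ?_⟩
  convert e2 using 2
  field_simp
  ring

lemma box_interior {K : Set (ℝ × ℝ)} {x y : ℝ} (h : (x, y) ∈ interior K) :
    ∃ ε > 0, ∀ u v : ℝ, |u - x| ≤ ε → |v - y| ≤ ε → (u, v) ∈ interior K := by
  obtain ⟨ε, he, hb⟩ := Metric.isOpen_iff.1 isOpen_interior _ h
  refine ⟨ε / 2, by positivity, ?_⟩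
  intro u v hu hv
  apply hb
  rw [Metric.mem_ball, Prod.dist_eq, Real.dist_eq, Real.dist_eq]
  exact max_lt (by simp only; linarith) (by simp only; linarith)

/-- A horizontal three-chord configuration. -/
def PreC (K I : Set (ℝ × ℝ)) (t a1 a2 b1 b2 c1 l : ℝ) : Prop :=
  (a1, a2) ∈ K ∧ (a1 + t, a2) ∈ K ∧ (b1, b2) ∈ K ∧ (b1 + t, b2) ∈ K ∧
  (c1, (a2 + b2) / 2) ∈ K ∧ (c1 + l, (a2 + b2) / 2) ∈ K ∧
  (c1, (a2 + b2) / 2) ∉ I ∧ (c1 + l, (a2 + b2) / 2) ∉ I ∧ t ≤ l ∧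
  (∀ x y : ℝ, (x, y) ∈ I → (x + t, y) ∈ I → y ≤ a2) ∧
  (∀ x y : ℝ, (x, y) ∈ I → (x + t, y) ∈ I → b2 ≤ y)

/-- The consequences of a configuration that do not mention the interior. -/
def NConf (K : Set (ℝ × ℝ)) (t a1 a2 b1 b2 c1 l : ℝ) : Prop :=
  0 < t ∧ (a1, a2) ∈ K ∧ (a1 + t, a2) ∈ K ∧ (b1, b2) ∈ K ∧ (b1 + t, b2) ∈ K ∧
  (c1, (a2 + b2) / 2) ∈ K ∧ (c1 + l, (a2 + b2) / 2) ∈ K ∧ b2 < a2 ∧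
  (∀ x y : ℝ, (x, y) ∈ K → (x + t, y) ∈ K → y ≤ a2) ∧
  (∀ x y : ℝ, (x, y) ∈ K → (x + t, y) ∈ K → b2 ≤ y) ∧
  (∀ x : ℝ, (x, (a2 + b2) / 2) ∈ K → c1 ≤ x ∧ x ≤ c1 + l)

lemma PreC.nconf {K : Set (ℝ × ℝ)} (hK : Convex ℝ K) (hi : (interior K).Nonempty)
    {t a1 a2 b1 b2 c1 l p q L : ℝ} (H : PreC K (interior K) t a1 a2 b1 b2 c1 l) (ht : 0 < t)
    (h1 : (p, q) ∈ K) (h2 : (p + L, q) ∈ K) (hL : t < L) : NConf K t a1 a2 b1 b2 c1 l := by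
  obtain ⟨A, A', B, B', C, C', NC, NC', hl, WT, WB⟩ := H
  obtain ⟨z, w, hz, hz'⟩ := slater hK hi h1 h2 ht hL
  obtain ⟨ε, he, hb⟩ := box_interior hz
  obtain ⟨ε', he', hb'⟩ := box_interior hz'
  have hm : 0 < min ε ε' := lt_min he he'
  have hwa : w < a2 := by
    have := WT z (w + min ε ε')
      (hb _ _ (by simp [he.le]) (by rw [add_sub_cancel_left, abs_of_pos hm]; exact min_le_left _ _))
      (hb' _ _ (by simp [he'.le]) (by rw [add_sub_cancel_left, abs_of_pos hm]; exact min_le_right _ _))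
    linarith
  have hwb : b2 < w := by
    have := WB z (w - min ε ε')
      (hb _ _ (by simp [he.le]) (by
        rw [sub_sub_cancel_left, abs_neg, abs_of_pos hm]; exact min_le_left _ _))
      (hb' _ _ (by simp [he'.le]) (by
        rw [sub_sub_cancel_left, abs_neg, abs_of_pos hm]; exact min_le_right _ _))
    linarith
  refine ⟨ht, A, A', B, B', C, C', by linarith, ?_, ?_, ?_⟩
  · intro x y hx hx'
    by_contra hc
    push Not at hc
    have hd : 0 < y - w := by linarith
    have s0 : 0 < (y - a2) / (2 * (y - w)) := by
      apply div_pos <;> linarith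
    have s1 : (y - a2) / (2 * (y - w)) ≤ 1 := by
      rw [div_le_one (by linarith)]; linarith
    have e1 := int_mix hK hx hz _ s0 s1
    have e2 := int_mix hK hx' hz' _ s0 s1
    have := WT _ _ e1 (by convert e2 using 2; ring)
    have e3 : (y - a2) / (2 * (y - w)) * (y - w) = (y - a2) / 2 := by field_simp
    nlinarith
  · intro x y hx hx'
    by_contra hc
    push Not at hc
    have hd : 0 < w - y := by linarith
    have s0 : 0 < (b2 - y) / (2 * (w - y)) := by
      apply div_pos <;> linarith
    have s1 : (b2 - y) / (2 * (w - y)) ≤ 1 := by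
      rw [div_le_one (by linarith)]; linarith
    have e1 := int_mix hK hx hz _ s0 s1
    have e2 := int_mix hK hx' hz' _ s0 s1
    have := WB _ _ e1 (by convert e2 using 2; ring)
    have e3 : (b2 - y) / (2 * (w - y)) * (w - y) = (b2 - y) / 2 := by field_simp
    nlinarith
  · intro x hx
    constructor
    · by_contra hc
      push Not at hc
      exact NC (mid_interior hK hi hx C' hc (by linarith) A (by linarith) B (by linarith))
    · by_contra hc
      push Not at hc
      exact NC' (mid_interior hK hi C hx (by linarith) hc A (by linarith) B (by linarith))

lemma notInt_chord {K : Set (ℝ × ℝ)} (hK : Convex ℝ K) {x y t κ : ℝ} (ht : 0 < t) (hκ : |κ| ≤ 1)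
    (h1 : (x, y) ∈ K) (h2 : (x + t, y) ∈ K)
    (hn : ∀ u e : ℝ, 0 < e → (u, y + κ * e) ∈ K → (u + t, y + κ * e) ∉ K) :
    (x, y) ∉ interior K ∧ (x + t, y) ∉ interior K := by
  constructor
  · intro hi
    obtain ⟨ε, he, hb⟩ := box_interior hi
    have hs : 0 < ε / (t + ε) := by positivity
    have hs1 : ε / (t + ε) ≤ 1 := by rw [div_le_one (by linarith)]; linarith
    have m1 : (x - ε, y) ∈ K := interior_subset (hb _ _ (by
      rw [sub_sub_cancel_left, abs_neg, abs_of_pos he]) (by simp [he.le]))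
    have m2 : (x, y + κ * ε) ∈ K := interior_subset (hb _ _ (by simp [he.le]) (by
      rw [add_sub_cancel_left, abs_mul, abs_of_pos he]; nlinarith))
    refine hn (x - (1 - ε / (t + ε)) * ε) (ε / (t + ε) * ε) (by positivity) ?_ ?_
    · exact conv_mem hK m1 m2 _ hs.le hs1 (by ring) (by ring)
    · exact conv_mem hK h2 m2 _ hs.le hs1 (by field_simp; ring) (by ring)
  · intro hi
    obtain ⟨ε, he, hb⟩ := box_interior hi
    have hs : 0 < ε / (t + ε) := by positivity
    have hs1 : ε / (t + ε) ≤ 1 := by rw [div_le_one (by linarith)]; linarith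
    have m1 : (x + t + ε, y) ∈ K := interior_subset (hb _ _ (by
      rw [add_sub_cancel_left, abs_of_pos he]) (by simp [he.le]))
    have m2 : (x + t, y + κ * ε) ∈ K := interior_subset (hb _ _ (by simp [he.le]) (by
      rw [add_sub_cancel_left, abs_mul, abs_of_pos he]; nlinarith))
    refine hn (x + ε / (t + ε) * t) (ε / (t + ε) * ε) (by positivity) ?_ ?_
    · exact conv_mem hK h1 m2 _ hs.le hs1 (by ring) (by ring)
    · exact conv_mem hK m1 m2 _ hs.le hs1 (by field_simp; ring) (by ring)

lemma uniq_aux {K : Set (ℝ × ℝ)} (hK : Convex ℝ K) {t a1 a2 b1 b2 c1 t' a1' a2' b1' b2' c1' : ℝ}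
    (H : NConf K t a1 a2 b1 b2 c1 (2 * t)) (H' : NConf K t' a1' a2' b1' b2' c1' (2 * t'))
    (htt : t < t') (hy : a2' + b2' ≤ a2 + b2) : False := by
  obtain ⟨ht, A, A', B, B', C, C', hba, T, Bo, M⟩ := H
  obtain ⟨ht', Ax, Ax', Bx, Bx', Cx, Cx', hbax, Tx, Box, Mx⟩ := H'
  have q0 : 0 ≤ t / t' := by positivity
  have q1 : t / t' ≤ 1 := by rw [div_le_one ht']; exact htt.le
  have ha : a2' ≤ a2 := T a1' a2' Ax (conv_mem hK Ax Ax' _ q0 q1 (by field_simp; ring) (by ring))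
  have hb : b2 ≤ b2' := Bo b1' b2' Bx (conv_mem hK Bx Bx' _ q0 q1 (by field_simp; ring) (by ring))
  rcases eq_or_lt_of_le hy with hy | hy
  · rw [hy] at Cx Cx'
    have := M _ Cx
    have := M _ Cx'
    linarith
  set y := (a2 + b2) / 2 with hyd
  set y' := (a2' + b2') / 2 with hyd'
  have hA : 0 < a2 - y' := by linarith
  have hY : 0 < y - y' := by linarith
  have hY2 : 2 * (y - y') ≤ a2 - a2' := by linarith
  have s0 : 0 ≤ (y - y') / (a2 - y') := by positivity
  have s1 : (y - y') / (a2 - y') ≤ 1 := by rw [div_le_one hA]; linarith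
  have lev : y = (1 - (y - y') / (a2 - y')) * y' + (y - y') / (a2 - y') * a2 := by
    field_simp; ring
  have m1 := M _ (conv_mem hK Cx A _ s0 s1 rfl lev)
  have m2 := M _ (conv_mem hK Cx' A' _ s0 s1 rfl lev)
  have k1 : 2 * (t' - t) ≤ (y - y') / (a2 - y') * (2 * t' - t) := by
    nlinarith [m1.1, m2.2]
  have k1' : 2 * (t' - t) * (a2 - y') ≤ (y - y') * (2 * t' - t) := by
    have := mul_le_mul_of_nonneg_right k1 hA.le
    have e : (y - y') / (a2 - y') * (2 * t' - t) * (a2 - y') = (y - y') * (2 * t' - t) := by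
      field_simp
    linarith
  have hD : 0 < 2 * t' - t := by linarith
  have r0 : 0 ≤ t' / (2 * t' - t) := by positivity
  have r1 : t' / (2 * t' - t) ≤ 1 := by rw [div_le_one hD]; linarith
  have hr : t' / (2 * t' - t) * (2 * t' - t) = t' := div_mul_cancel₀ _ hD.ne'
  have k2 := Tx _ _ (conv_mem hK Cx A _ r0 r1 rfl rfl)
    (conv_mem hK Cx' A' _ r0 r1 (by linear_combination hr) rfl)
  have k2' : t' * (a2 - y') ≤ (a2' - y') * (2 * t' - t) := by
    have h3 : t' / (2 * t' - t) * (a2 - y') ≤ a2' - y' := by linarith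
    have := mul_le_mul_of_nonneg_right h3 hD.le
    have e : t' / (2 * t' - t) * (a2 - y') * (2 * t' - t) = t' * (a2 - y') := by
      linear_combination (a2 - y') * hr
    linarith
  nlinarith [mul_pos hY hD, mul_le_mul_of_nonneg_right hY2 hD.le]

def flipK (K : Set (ℝ × ℝ)) : Set (ℝ × ℝ) := {z | (z.1, -z.2) ∈ K}

lemma flipK_convex {K : Set (ℝ × ℝ)} (hK : Convex ℝ K) : Convex ℝ (flipK K) := by
  rintro ⟨x, y⟩ hx ⟨u, v⟩ hu a b ha hb hab
  have := hK hx hu ha hb hab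
  simp only [flipK, Set.mem_ofPred_eq] at *
  convert this using 1
  ext <;> simp <;> ring

lemma flipK_nconf {K : Set (ℝ × ℝ)} {t a1 a2 b1 b2 c1 l : ℝ} (H : NConf K t a1 a2 b1 b2 c1 l) :
    NConf (flipK K) t b1 (-b2) a1 (-a2) c1 l := by
  obtain ⟨ht, A, A', B, B', C, C', hba, T, Bo, M⟩ := H
  have e : -((-b2 + -a2) / 2) = (a2 + b2) / 2 := by ring
  refine ⟨ht, ?_, ?_, ?_, ?_, ?_, ?_, by linarith, ?_, ?_, ?_⟩
  · simpa [flipK] using B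
  · simpa [flipK] using B'
  · simpa [flipK] using A
  · simpa [flipK] using A'
  · simp only [flipK, Set.mem_ofPred_eq, e]; exact C
  · simp only [flipK, Set.mem_ofPred_eq, e]; exact C'
  · intro x y h h'
    have := Bo _ _ h h'
    simp only at this
    linarith
  · intro x y h h'
    have := T _ _ h h'
    simp only at this
    linarith
  · intro x h
    simp only [flipK, Set.mem_ofPred_eq, e] at h
    exact M _ h

lemma uniq_t {K : Set (ℝ × ℝ)} (hK : Convex ℝ K) {t a1 a2 b1 b2 c1 t' a1' a2' b1' b2' c1' : ℝ}
    (H : NConf K t a1 a2 b1 b2 c1 (2 * t)) (H' : NConf K t' a1' a2' b1' b2' c1' (2 * t')) :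
    t' ≤ t := by
  by_contra hc
  push Not at hc
  rcases le_total (a2' + b2') (a2 + b2) with h | h
  · exact uniq_aux hK H H' hc h
  · exact uniq_aux (flipK_convex hK) (flipK_nconf H) (flipK_nconf H') hc (by linarith)

lemma uniq_lev {K : Set (ℝ × ℝ)} {t a1 a2 b1 b2 c1 l a1' a2' b1' b2' c1' l' : ℝ}
    (H : NConf K t a1 a2 b1 b2 c1 l) (H' : NConf K t a1' a2' b1' b2' c1' l') :
    a2 = a2' ∧ b2 = b2' ∧ c1 = c1' ∧ l = l' := by
  obtain ⟨ht, A, A', B, B', C, C', hba, T, Bo, M⟩ := H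
  obtain ⟨ht', Ax, Ax', Bx, Bx', Cx, Cx', hbax, Tx, Box, Mx⟩ := H'
  have ha : a2 = a2' := le_antisymm (Tx _ _ A A') (T _ _ Ax Ax')
  have hb : b2 = b2' := le_antisymm (Bo _ _ Bx Bx') (Box _ _ B B')
  subst ha hb
  have := M _ Cx
  have := M _ Cx'
  have := Mx _ C
  have := Mx _ C'
  refine ⟨rfl, rfl, ?_, ?_⟩ <;> linarith [(M _ Cx).1, (Mx _ C).1, (M _ Cx').2, (Mx _ C').2]

/-- The body rotated by the angle `-s`. -/
noncomputable def Ks (B : Set (ℝ × ℝ)) (s : ℝ) : Set (ℝ × ℝ) :=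
  {z | (z.1 * Real.cos s - z.2 * Real.sin s, z.1 * Real.sin s + z.2 * Real.cos s) ∈ B}

lemma int_preimage (T : (ℝ × ℝ) ≃ᵃ[ℝ] (ℝ × ℝ)) (B : Set (ℝ × ℝ)) :
    interior {z | T z ∈ B} = {z | T z ∈ interior B} := by
  have := T.toHomeomorphOfFiniteDimensional.preimage_interior B
  exact this.symm

lemma conv_preimage (T : (ℝ × ℝ) ≃ᵃ[ℝ] (ℝ × ℝ)) {B : Set (ℝ × ℝ)} (hB : Convex ℝ B) :
    Convex ℝ {z | T z ∈ B} :=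
  hB.affine_preimage T.toAffineMap

lemma comp_preimage (T : (ℝ × ℝ) ≃ᵃ[ℝ] (ℝ × ℝ)) {B : Set (ℝ × ℝ)} (hB : IsCompact B) :
    IsCompact {z | T z ∈ B} := by
  have := (T.toHomeomorphOfFiniteDimensional.isCompact_preimage (s := B)).2 hB
  exact this

lemma exists_Ks (s : ℝ) : ∃ T : (ℝ × ℝ) ≃ᵃ[ℝ] (ℝ × ℝ), ∀ B, Ks B s = {z | T z ∈ B} := by
  obtain ⟨T, hT⟩ := exists_aff (Real.cos s) (-Real.sin s) (Real.sin s) (Real.cos s) 0 0 (by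
    have := Real.sin_sq_add_cos_sq s
    nlinarith)
  refine ⟨T, fun B => ?_⟩
  ext ⟨x, y⟩
  simp only [Ks, Set.mem_ofPred_eq, hT]
  have e : ((x * Real.cos s - y * Real.sin s, x * Real.sin s + y * Real.cos s) : ℝ × ℝ) =
    (Real.cos s * x + -Real.sin s * y + 0, Real.sin s * x + Real.cos s * y + 0) := by
    ext <;> simp <;> ring
  rw [e]

lemma Ks_interior (B : Set (ℝ × ℝ)) (s : ℝ) : interior (Ks B s) = Ks (interior B) s := by
  obtain ⟨T, hT⟩ := exists_Ks s
  rw [hT, hT, int_preimage]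

lemma Ks_zero (B : Set (ℝ × ℝ)) : Ks B 0 = B := by
  ext ⟨x, y⟩
  simp [Ks]

def Conf8 (B : Set (ℝ × ℝ)) (q : Fin 8 → ℝ) : Prop :=
  PreC (Ks B (q 0)) (Ks (interior B) (q 0)) (q 1) (q 2) (q 3) (q 4) (q 5) (q 6) (q 7)

lemma cl_mem {B : Set (ℝ × ℝ)} (hB : IsClosed B) {f g s : (Fin 8 → ℝ) → ℝ} (hf : Continuous f)
    (hg : Continuous g) (hs : Continuous s) : IsClosed {q | (f q, g q) ∈ Ks B (s q)} := by
  have : Continuous (fun q => (f q * Real.cos (s q) - g q * Real.sin (s q),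
    f q * Real.sin (s q) + g q * Real.cos (s q))) := by fun_prop
  exact hB.preimage this

lemma cl_notMem {I : Set (ℝ × ℝ)} (hI : IsOpen I) {f g s : (Fin 8 → ℝ) → ℝ} (hf : Continuous f)
    (hg : Continuous g) (hs : Continuous s) : IsClosed {q | (f q, g q) ∉ Ks I (s q)} := by
  have : Continuous (fun q => (f q * Real.cos (s q) - g q * Real.sin (s q),
    f q * Real.sin (s q) + g q * Real.cos (s q))) := by fun_prop
  exact (hI.preimage this).isClosed_compl

lemma closed_conf {B : Set (ℝ × ℝ)} (hB : IsClosed B) : IsClosed {q | Conf8 B q} := by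
  have key : ∀ h : (ℝ → (Fin 8 → ℝ) → Prop), (∀ y, IsClosed {q | h y q}) →
      IsClosed {q : Fin 8 → ℝ | ∀ x y : ℝ, (x, y) ∈ Ks (interior B) (q 0) →
        (x + q 1, y) ∈ Ks (interior B) (q 0) → h y q} := by
    intro h hh
    have e : {q : Fin 8 → ℝ | ∀ x y : ℝ, (x, y) ∈ Ks (interior B) (q 0) →
        (x + q 1, y) ∈ Ks (interior B) (q 0) → h y q} =
        ⋂ (x : ℝ) (y : ℝ), ({q | (x, y) ∉ Ks (interior B) (q 0)} ∪
          {q | (x + q 1, y) ∉ Ks (interior B) (q 0)} ∪ {q | h y q}) := by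
      ext q
      simp only [Set.mem_ofPred_eq, Set.mem_iInter, Set.mem_union]
      constructor
      · intro H x y
        have := H x y
        tauto
      · intro H x y
        have := H x y
        tauto
    rw [e]
    refine isClosed_iInter fun x => isClosed_iInter fun y => ((IsClosed.union ?_ ?_).union (hh y))
    · exact cl_notMem isOpen_interior (by fun_prop) (by fun_prop) (by fun_prop)
    · exact cl_notMem isOpen_interior (by fun_prop) (by fun_prop) (by fun_prop)
  unfold Conf8 PreC
  refine IsClosed.and ?_ (IsClosed.and ?_ (IsClosed.and ?_ (IsClosed.and ?_ (IsClosed.and ?_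
    (IsClosed.and ?_ (IsClosed.and ?_ (IsClosed.and ?_ (IsClosed.and ?_ (IsClosed.and ?_ ?_)))))))))
  · exact cl_mem hB (by fun_prop) (by fun_prop) (by fun_prop)
  · exact cl_mem hB (by fun_prop) (by fun_prop) (by fun_prop)
  · exact cl_mem hB (by fun_prop) (by fun_prop) (by fun_prop)
  · exact cl_mem hB (by fun_prop) (by fun_prop) (by fun_prop)
  · exact cl_mem hB (by fun_prop) (by fun_prop) (by fun_prop)
  · exact cl_mem hB (by fun_prop) (by fun_prop) (by fun_prop)
  · exact cl_notMem isOpen_interior (by fun_prop) (by fun_prop) (by fun_prop)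
  · exact cl_notMem isOpen_interior (by fun_prop) (by fun_prop) (by fun_prop)
  · exact isClosed_le (by fun_prop) (by fun_prop)
  · exact key (fun y q => y ≤ q 3) (fun y => isClosed_le (by fun_prop) (by fun_prop))
  · exact key (fun y q => q 5 ≤ y) (fun y => isClosed_le (by fun_prop) (by fun_prop))

lemma Ks_bound {B : Set (ℝ × ℝ)} (hB : IsCompact B) :
    ∃ M : ℝ, ∀ s x y : ℝ, (x, y) ∈ Ks B s → |x| ≤ M ∧ |y| ≤ M := by
  obtain ⟨R, hR⟩ := hB.isBounded.exists_norm_le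
  refine ⟨2 * R, ?_⟩
  intro s x y h
  have := hR _ h
  rw [Prod.norm_def, max_le_iff, Real.norm_eq_abs, Real.norm_eq_abs] at this
  simp only at this
  obtain ⟨h1, h2⟩ := this
  set u := x * Real.cos s - y * Real.sin s with hu
  set v := x * Real.sin s + y * Real.cos s with hv
  have hx : x = u * Real.cos s + v * Real.sin s := by
    rw [hu, hv]; linear_combination -x * Real.sin_sq_add_cos_sq s
  have hy : y = -(u * Real.sin s) + v * Real.cos s := by
    rw [hu, hv]; linear_combination -y * Real.sin_sq_add_cos_sq s
  have b : ∀ p k : ℝ, |p| ≤ R → |k| ≤ 1 → |p * k| ≤ R := by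
    intro p k hp hk
    rw [abs_mul]
    nlinarith [abs_nonneg p, abs_nonneg k]
  have c1 := b u _ h1 (Real.abs_cos_le_one s)
  have c2 := b u _ h1 (Real.abs_sin_le_one s)
  have c3 := b v _ h2 (Real.abs_cos_le_one s)
  have c4 := b v _ h2 (Real.abs_sin_le_one s)
  constructor
  · rw [hx]
    exact (abs_add_le _ _).trans (by linarith)
  · rw [hy]
    exact (abs_add_le _ _).trans (by rw [abs_neg]; linarith)

lemma conf_compact {B : Set (ℝ × ℝ)} (hB : IsCompact B) (a b : ℝ) {D : Set (Fin 8 → ℝ)} (hD : IsClosed D) :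
    IsCompact {q | (a ≤ q 0 ∧ q 0 ≤ b) ∧ Conf8 B q ∧ q ∈ D} := by
  obtain ⟨M, hM⟩ := Ks_bound hB
  set R := 4 * M + |a| + |b| with hR
  refine IsCompact.of_isClosed_subset (isCompact_Icc (a := fun _ : Fin 8 => -R) (b := fun _ => R)) ?_ ?_
  · exact ((isClosed_le (by fun_prop) (by fun_prop)).and
      (isClosed_le (by fun_prop) (by fun_prop))).and ((closed_conf hB.isClosed).and hD)
  · rintro q ⟨⟨h1, h2⟩, ⟨A, A', Bb, B', C, C', -⟩, -⟩
    have A := hM _ _ _ A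
    have A' := hM _ _ _ A'
    have Bb := hM _ _ _ Bb
    have C := hM _ _ _ C
    have C' := hM _ _ _ C'
    simp only [abs_le] at A A' Bb C C'
    have := neg_abs_le a
    have := le_abs_self b
    have := abs_nonneg a
    have := abs_nonneg b
    constructor <;> intro i <;> fin_cases i <;> simp only [hR] <;> simp <;>
      linarith [A.1.1, A.1.2, A.2.1, A.2.2, A'.1.1, A'.1.2, Bb.1.1, Bb.1.2, Bb.2.1, Bb.2.2, C.1.1, C.1.2, C'.1.1, C'.1.2]

lemma exists_preC {K : Set (ℝ × ℝ)} (hK : Convex ℝ K) (hc : IsCompact K) {p q t : ℝ}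
    (h1 : (p, q) ∈ K) (h2 : (p + t, q) ∈ K) :
    ∃ a1 a2 b1 b2 c1 l, PreC K (interior K) t a1 a2 b1 b2 c1 l := by
  have hKt : IsCompact (K ∩ {z : ℝ × ℝ | (z.1 + t, z.2) ∈ K}) :=
    hc.inter_right (hc.isClosed.preimage (f := fun z : ℝ × ℝ => (z.1 + t, z.2)) (by fun_prop))
  have hne : (K ∩ {z : ℝ × ℝ | (z.1 + t, z.2) ∈ K}).Nonempty := ⟨(p, q), h1, h2⟩
  obtain ⟨⟨a1, a2⟩, ⟨A, A'⟩, hmax⟩ := hKt.exists_isMaxOn hne (f := Prod.snd) continuous_snd.continuousOn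
  obtain ⟨⟨b1, b2⟩, ⟨B, B'⟩, hmin⟩ := hKt.exists_isMinOn hne (f := Prod.snd) continuous_snd.continuousOn
  simp only [Set.mem_ofPred_eq] at A' B'
  have m1 : ((a1 + b1) / 2, (a2 + b2) / 2) ∈ K :=
    conv_mem hK A B (1 / 2) (by norm_num) (by norm_num) (by ring) (by ring)
  have m2 : ((a1 + b1) / 2 + t, (a2 + b2) / 2) ∈ K :=
    conv_mem hK A' B' (1 / 2) (by norm_num) (by norm_num) (by ring) (by ring)
  have hs : IsCompact (K ∩ {z : ℝ × ℝ | z.2 = (a2 + b2) / 2}) :=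
    hc.inter_right (isClosed_eq continuous_snd continuous_const)
  have hsn : (K ∩ {z : ℝ × ℝ | z.2 = (a2 + b2) / 2}).Nonempty := ⟨_, m1, rfl⟩
  obtain ⟨⟨c, c'⟩, ⟨C, C'⟩, cmin⟩ := hs.exists_isMinOn hsn (f := Prod.fst) continuous_fst.continuousOn
  obtain ⟨⟨d, d'⟩, ⟨D, D'⟩, dmax⟩ := hs.exists_isMaxOn hsn (f := Prod.fst) continuous_fst.continuousOn
  simp only [Set.mem_ofPred_eq] at C' D'
  subst C' D'
  have hcm : ∀ x, (x, (a2 + b2) / 2) ∈ K → c ≤ x := fun x hx =>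
    cmin (show (x, (a2 + b2) / 2) ∈ _ from ⟨hx, rfl⟩)
  have hdm : ∀ x, (x, (a2 + b2) / 2) ∈ K → x ≤ d := fun x hx =>
    dmax (show (x, (a2 + b2) / 2) ∈ _ from ⟨hx, rfl⟩)
  refine ⟨a1, a2, b1, b2, c, d - c, A, A', B, B', C, by simpa using D, ?_, ?_, ?_, ?_, ?_⟩
  · intro h
    obtain ⟨ε, he, hb⟩ := box_interior h
    have := hcm (c - ε) (interior_subset (hb _ _ (by
      rw [sub_sub_cancel_left, abs_neg, abs_of_pos he]) (by simp [he.le])))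
    linarith
  · intro h
    rw [add_sub_cancel] at h
    obtain ⟨ε, he, hb⟩ := box_interior h
    have := hdm (d + ε) (interior_subset (hb _ _ (by
      rw [add_sub_cancel_left, abs_of_pos he]) (by simp [he.le])))
    linarith
  · linarith [hcm _ m1, hdm _ m2]
  · intro x y hx hx'
    exact hmax (show (x, y) ∈ _ from ⟨interior_subset hx, (interior_subset hx' : (x + t, y) ∈ K)⟩)
  · intro x y hx hx'
    exact hmin (show (x, y) ∈ _ from ⟨interior_subset hx, (interior_subset hx' : (x + t, y) ∈ K)⟩)

lemma exists_conf {K : Set (ℝ × ℝ)} (hK : Convex ℝ K) (hc : IsCompact K)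
    (hi : (interior K).Nonempty) {p q L : ℝ} (hL : 0 < L) (h1 : (p, q) ∈ K) (h2 : (p + L, q) ∈ K) :
    ∃ t a1 a2 b1 b2 c1, L / 4 ≤ t ∧ PreC K (interior K) t a1 a2 b1 b2 c1 (2 * t) := by
  have hS : IsCompact ((K ×ˢ K) ∩ {w : (ℝ × ℝ) × (ℝ × ℝ) | w.1.2 = w.2.2}) :=
    (hc.prod hc).inter_right (isClosed_eq (by fun_prop) (by fun_prop))
  have hSn : ((K ×ˢ K) ∩ {w : (ℝ × ℝ) × (ℝ × ℝ) | w.1.2 = w.2.2}).Nonempty :=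
    ⟨((p, q), (p + L, q)), ⟨h1, h2⟩, rfl⟩
  obtain ⟨⟨⟨u, v⟩, ⟨u', v'⟩⟩, ⟨⟨hu, hu'⟩, hv⟩, hmax⟩ := hS.exists_isMaxOn hSn
    (f := fun w => w.2.1 - w.1.1) (by fun_prop)
  simp only [Set.mem_ofPred_eq] at hv hu hu'
  subst hv
  have hD : ∀ x x' y, (x, y) ∈ K → (x', y) ∈ K → x' - x ≤ u' - u := fun x x' y h h' =>
    hmax (show ((x, y), (x', y)) ∈ _ from ⟨⟨h, h'⟩, rfl⟩)
  obtain ⟨D, hDe⟩ : ∃ D, D = u' - u := ⟨_, rfl⟩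
  obtain rfl : u' = u + D := by linarith
  rw [← hDe] at hD
  clear hDe hmax
  have hLD : L ≤ D := by have := hD _ _ _ h1 h2; linarith
  have chord : ∀ t, 0 ≤ t → t ≤ D → (u + t, v) ∈ K := by
    intro t h0 h1
    have hD0 : 0 < D := by linarith
    exact conv_mem hK hu hu' (t / D) (by positivity) (by rw [div_le_one hD0]; exact h1)
      (by field_simp; ring) (by ring)
  let Lo : Set ℝ := (fun q : Fin 8 → ℝ => q 1) ''
    {q | ((0 : ℝ) ≤ q 0 ∧ q 0 ≤ 0) ∧ Conf8 K q ∧ q ∈ {q : Fin 8 → ℝ | 2 * q 1 ≤ q 7}}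
  let Hi : Set ℝ := (fun q : Fin 8 → ℝ => q 1) ''
    {q | ((0 : ℝ) ≤ q 0 ∧ q 0 ≤ 0) ∧ Conf8 K q ∧ q ∈ {q : Fin 8 → ℝ | q 7 ≤ 2 * q 1}}
  have cLo : IsClosed Lo := ((conf_compact hc 0 0 (isClosed_le (by fun_prop) (by fun_prop))).image
    (continuous_apply 1)).isClosed
  have cHi : IsClosed Hi := ((conf_compact hc 0 0 (isClosed_le (by fun_prop) (by fun_prop))).image
    (continuous_apply 1)).isClosed
  have inLo : ∀ t a1 a2 b1 b2 c1 l, PreC K (interior K) t a1 a2 b1 b2 c1 l → 2 * t ≤ l → t ∈ Lo := by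
    intro t a1 a2 b1 b2 c1 l H hl
    refine ⟨![0, t, a1, a2, b1, b2, c1, l], ⟨⟨by simp, by simp⟩, ?_, ?_⟩, by simp⟩
    · simp only [Conf8]
      simpa [Ks_zero] using H
    · simpa using hl
  have inHi : ∀ t a1 a2 b1 b2 c1 l, PreC K (interior K) t a1 a2 b1 b2 c1 l → l ≤ 2 * t → t ∈ Hi := by
    intro t a1 a2 b1 b2 c1 l H hl
    refine ⟨![0, t, a1, a2, b1, b2, c1, l], ⟨⟨by simp, by simp⟩, ?_, ?_⟩, by simp⟩
    · simp only [Conf8]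
      simpa [Ks_zero] using H
    · simpa using hl
  have nonneg : ∀ t, D / 4 ≤ t → t ≤ 3 * D / 4 → ∃ a1 a2 b1 b2 c1 l,
      PreC K (interior K) t a1 a2 b1 b2 c1 l ∧ NConf K t a1 a2 b1 b2 c1 l := by
    intro t h1 h2
    obtain ⟨a1, a2, b1, b2, c1, l, H⟩ := exists_preC hK hc hu (chord t (by linarith) (by linarith))
    exact ⟨a1, a2, b1, b2, c1, l, H, H.nconf hK hi (by linarith) hu hu' (by linarith)⟩
  have hpc := isPreconnected_closed_iff.1 (isPreconnected_Icc (a := D / 4) (b := 3 * D / 4)) Lo Hi cLo cHi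
    (by
      rintro t ⟨h1, h2⟩
      obtain ⟨a1, a2, b1, b2, c1, l, H, -⟩ := nonneg t h1 h2
      rcases le_total (2 * t) l with h | h
      · exact Or.inl (inLo _ _ _ _ _ _ _ H h)
      · exact Or.inr (inHi _ _ _ _ _ _ _ H h))
    (by
      refine ⟨D / 4, ⟨le_rfl, by linarith⟩, ?_⟩
      obtain ⟨a1, a2, b1, b2, c1, l, H, N⟩ := nonneg (D / 4) le_rfl (by linarith)
      refine inLo _ _ _ _ _ _ _ H ?_
      obtain ⟨ht, A, A', B, B', C, C', hba, T, Bo, M⟩ := N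
      have g := chord (D / 4) (by linarith) (by linarith)
      have ga := T _ _ hu g
      have gb := Bo _ _ hu g
      rcases le_total v ((a2 + b2) / 2) with hv | hv
      · have hd : 0 < a2 - v := by linarith
        have r0 : 0 ≤ ((a2 + b2) / 2 - v) / (a2 - v) := div_nonneg (by linarith) hd.le
        have r1 : ((a2 + b2) / 2 - v) / (a2 - v) ≤ 1 / 2 := by rw [div_le_iff₀ hd]; linarith
        have lev : (a2 + b2) / 2 = (1 - ((a2 + b2) / 2 - v) / (a2 - v)) * v +
            ((a2 + b2) / 2 - v) / (a2 - v) * a2 := by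
          have := div_mul_cancel₀ ((a2 + b2) / 2 - v) hd.ne'
          linear_combination -this
        have m1 := (M _ (conv_mem hK hu A _ r0 (by linarith) rfl lev)).1
        have m2 := (M _ (conv_mem hK hu' A' _ r0 (by linarith) rfl lev)).2
        nlinarith
      · have hd : 0 < v - b2 := by linarith
        have r0 : 0 ≤ (v - (a2 + b2) / 2) / (v - b2) := div_nonneg (by linarith) hd.le
        have r1 : (v - (a2 + b2) / 2) / (v - b2) ≤ 1 / 2 := by rw [div_le_iff₀ hd]; linarith
        have lev : (a2 + b2) / 2 = (1 - (v - (a2 + b2) / 2) / (v - b2)) * v +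
            (v - (a2 + b2) / 2) / (v - b2) * b2 := by
          have := div_mul_cancel₀ (v - (a2 + b2) / 2) hd.ne'
          linear_combination this
        have m1 := (M _ (conv_mem hK hu B _ r0 (by linarith) rfl lev)).1
        have m2 := (M _ (conv_mem hK hu' B' _ r0 (by linarith) rfl lev)).2
        nlinarith)
    (by
      refine ⟨3 * D / 4, ⟨by linarith, le_rfl⟩, ?_⟩
      obtain ⟨a1, a2, b1, b2, c1, l, H, N⟩ := nonneg (3 * D / 4) (by linarith) le_rfl
      refine inHi _ _ _ _ _ _ _ H ?_
      have := hD _ _ _ N.2.2.2.2.2.1 N.2.2.2.2.2.2.1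
      linarith)
  obtain ⟨t, ⟨ht1, ht2⟩, ⟨q, ⟨⟨z1, z2⟩, Q, hq⟩, hqt⟩, ⟨q', ⟨⟨z1', z2'⟩, Q', hq'⟩, hqt'⟩⟩ := hpc
  have e0 : q 0 = 0 := le_antisymm z2 z1
  have e0' : q' 0 = 0 := le_antisymm z2' z1'
  simp only [Set.mem_ofPred_eq] at hqt hqt' hq hq'
  simp only [Conf8, e0, e0', Ks_zero, hqt, hqt'] at Q Q'
  rw [hqt] at hq
  rw [hqt'] at hq'
  have N := Q.nconf hK hi (by linarith) hu hu' (by linarith)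
  have N' := Q'.nconf hK hi (by linarith) hu hu' (by linarith)
  have hl := (uniq_lev N N').2.2.2
  have hl2 : q 7 = 2 * t := by linarith
  rw [hl2] at Q
  exact ⟨t, _, _, _, _, _, by linarith, Q⟩

lemma PreC.neg {B : Set (ℝ × ℝ)} {t a1 a2 b1 b2 c1 : ℝ}
    (H : PreC (Ks B 0) (Ks (interior B) 0) t a1 a2 b1 b2 c1 (2 * t)) :
    PreC (Ks B Real.pi) (Ks (interior B) Real.pi) t (-b1 - t) (-b2) (-a1 - t) (-a2) (-c1 - 2 * t) (2 * t) := by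
  have key : ∀ (S : Set (ℝ × ℝ)) (x y : ℝ), (x, y) ∈ Ks S Real.pi ↔ (-x, -y) ∈ Ks S 0 := by
    intro S x y
    simp [Ks]
  obtain ⟨A, A', Bb, B', C, C', NC, NC', hl, WT, WB⟩ := H
  have e : -((-b2 + -a2) / 2) = (a2 + b2) / 2 := by ring
  have e1 : -(-b1 - t) = b1 + t := by ring
  have e2 : -(-b1 - t + t) = b1 := by ring
  have e3 : -(-a1 - t) = a1 + t := by ring
  have e4 : -(-a1 - t + t) = a1 := by ring
  have e5 : -(-c1 - 2 * t) = c1 + 2 * t := by ring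
  have e6 : -(-c1 - 2 * t + 2 * t) = c1 := by ring
  unfold PreC
  simp only [key, e, e1, e2, e3, e4, e5, e6, neg_neg]
  refine ⟨B', Bb, A', A, C', C, NC', NC, hl, ?_, ?_⟩
  · intro x y h h'
    have := WB (-(x + t)) (-y) h' (by convert h using 2; ring)
    linarith
  · intro x y h h'
    have := WT (-(x + t)) (-y) h' (by convert h using 2; ring)
    linarith

lemma Ks_convex {B : Set (ℝ × ℝ)} (h : Convex ℝ B) (s : ℝ) : Convex ℝ (Ks B s) := by
  obtain ⟨T, hT⟩ := exists_Ks s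
  rw [hT]
  exact conv_preimage T h

lemma Ks_compact {B : Set (ℝ × ℝ)} (h : IsCompact B) (s : ℝ) : IsCompact (Ks B s) := by
  obtain ⟨T, hT⟩ := exists_Ks s
  rw [hT]
  exact comp_preimage T h

lemma Ks_pt {B : Set (ℝ × ℝ)} {u v : ℝ} (s e : ℝ)
    (h : (u + e * Real.cos s, v + e * Real.sin s) ∈ B) :
    (u * Real.cos s + v * Real.sin s + e, -(u * Real.sin s) + v * Real.cos s) ∈ Ks B s := by
  simp only [Ks, Set.mem_ofPred_eq]
  convert h using 2
  · linear_combination u * Real.sin_sq_add_cos_sq s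
  · linear_combination v * Real.sin_sq_add_cos_sq s

lemma exists_hexagon {B : Set (ℝ × ℝ)} (hB : Convex ℝ B) (hc : IsCompact B)
    (hi : (interior B).Nonempty) :
    ∃ s t a1 a2 b1 b2 c1, 0 < t ∧ a1 + b1 = 2 * c1 + t ∧
      PreC (Ks B s) (interior (Ks B s)) t a1 a2 b1 b2 c1 (2 * t) := by
  obtain ⟨⟨u, v⟩, hw⟩ := hi
  obtain ⟨ε, he, hb⟩ := box_interior hw
  have chord : ∀ s e, |e| ≤ ε → (u * Real.cos s + v * Real.sin s + e,
      -(u * Real.sin s) + v * Real.cos s) ∈ Ks (interior B) s := by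
    intro s e hle
    apply Ks_pt
    apply hb
    · rw [add_sub_cancel_left, abs_mul]
      nlinarith [Real.abs_cos_le_one s, abs_nonneg e]
    · rw [add_sub_cancel_left, abs_mul]
      nlinarith [Real.abs_sin_le_one s, abs_nonneg e]
  have hne : ∀ s, (interior (Ks B s)).Nonempty := by
    intro s
    rw [Ks_interior]
    exact ⟨_, chord s 0 (by simp [he.le])⟩
  have sub : ∀ s, Ks (interior B) s ⊆ Ks B s := fun s z hz => interior_subset (s := B) hz
  have conf : ∀ s, ∃ t a1 a2 b1 b2 c1, ε / 4 ≤ t ∧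
      PreC (Ks B s) (Ks (interior B) s) t a1 a2 b1 b2 c1 (2 * t) := by
    intro s
    have := exists_conf (Ks_convex hB s) (Ks_compact hc s) (hne s) he
      (by have := sub s (chord s 0 (by simp [he.le])); rw [add_zero] at this; exact this)
      (sub s (chord s ε (by rw [abs_of_pos he])))
    rwa [Ks_interior] at this
  let Zp : Set ℝ := (fun q : Fin 8 → ℝ => q 0) ''
    {q | (0 ≤ q 0 ∧ q 0 ≤ Real.pi) ∧ Conf8 B q ∧ q ∈ {q : Fin 8 → ℝ | q 7 = 2 * q 1 ∧ ε / 4 ≤ q 1 ∧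
      q 2 + q 4 ≤ 2 * q 6 + q 1}}
  let Zm : Set ℝ := (fun q : Fin 8 → ℝ => q 0) ''
    {q | (0 ≤ q 0 ∧ q 0 ≤ Real.pi) ∧ Conf8 B q ∧ q ∈ {q : Fin 8 → ℝ | q 7 = 2 * q 1 ∧ ε / 4 ≤ q 1 ∧
      2 * q 6 + q 1 ≤ q 2 + q 4}}
  have cp : IsClosed Zp := ((conf_compact hc _ _ ((isClosed_eq (by fun_prop) (by fun_prop)).and
    ((isClosed_le (by fun_prop) (by fun_prop)).and
      (isClosed_le (by fun_prop) (by fun_prop))))).image (continuous_apply 0)).isClosed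
  have cm : IsClosed Zm := ((conf_compact hc _ _ ((isClosed_eq (by fun_prop) (by fun_prop)).and
    ((isClosed_le (by fun_prop) (by fun_prop)).and
      (isClosed_le (by fun_prop) (by fun_prop))))).image (continuous_apply 0)).isClosed
  have inp : ∀ s t a1 a2 b1 b2 c1, 0 ≤ s → s ≤ Real.pi → ε / 4 ≤ t →
      PreC (Ks B s) (Ks (interior B) s) t a1 a2 b1 b2 c1 (2 * t) → a1 + b1 ≤ 2 * c1 + t → s ∈ Zp := by
    intro s t a1 a2 b1 b2 c1 h0 h1 ht H hd
    refine ⟨![s, t, a1, a2, b1, b2, c1, 2 * t], ⟨⟨by simpa using h0, by simpa using h1⟩, ?_, ?_⟩, by simp⟩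
    · simp only [Conf8]
      simpa using H
    · refine ⟨by simp, by simpa using ht, by simpa using hd⟩
  have inm : ∀ s t a1 a2 b1 b2 c1, 0 ≤ s → s ≤ Real.pi → ε / 4 ≤ t →
      PreC (Ks B s) (Ks (interior B) s) t a1 a2 b1 b2 c1 (2 * t) → 2 * c1 + t ≤ a1 + b1 → s ∈ Zm := by
    intro s t a1 a2 b1 b2 c1 h0 h1 ht H hd
    refine ⟨![s, t, a1, a2, b1, b2, c1, 2 * t], ⟨⟨by simpa using h0, by simpa using h1⟩, ?_, ?_⟩, by simp⟩
    · simp only [Conf8]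
      simpa using H
    · refine ⟨by simp, by simpa using ht, by simpa using hd⟩
  have hpi := Real.pi_pos
  have ends : (Set.Icc 0 Real.pi ∩ Zp).Nonempty ∧ (Set.Icc 0 Real.pi ∩ Zm).Nonempty := by
    obtain ⟨t, a1, a2, b1, b2, c1, ht, H⟩ := conf 0
    rcases le_total (a1 + b1) (2 * c1 + t) with h | h
    · exact ⟨⟨0, ⟨le_rfl, hpi.le⟩, inp _ _ _ _ _ _ _ le_rfl hpi.le ht H h⟩,
        ⟨Real.pi, ⟨hpi.le, le_rfl⟩, inm _ _ _ _ _ _ _ hpi.le le_rfl ht H.neg (by linarith)⟩⟩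
    · exact ⟨⟨Real.pi, ⟨hpi.le, le_rfl⟩, inp _ _ _ _ _ _ _ hpi.le le_rfl ht H.neg (by linarith)⟩,
        ⟨0, ⟨le_rfl, hpi.le⟩, inm _ _ _ _ _ _ _ le_rfl hpi.le ht H h⟩⟩
  obtain ⟨s, -, ⟨q, ⟨-, Q, hq7, hqt, hqd⟩, hqs⟩, ⟨q', ⟨-, Q', hq7', hqt', hqd'⟩, hqs'⟩⟩ :=
    isPreconnected_closed_iff.1 (isPreconnected_Icc (a := 0) (b := Real.pi)) Zp Zm cp cm
      (by
        rintro s ⟨h0, h1⟩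
        obtain ⟨t, a1, a2, b1, b2, c1, ht, H⟩ := conf s
        rcases le_total (a1 + b1) (2 * c1 + t) with h | h
        · exact Or.inl (inp _ _ _ _ _ _ _ h0 h1 ht H h)
        · exact Or.inr (inm _ _ _ _ _ _ _ h0 h1 ht H h)) ends.1 ends.2
  simp only at hqs hqs'
  simp only [Conf8, hqs, hqs', hq7, hq7'] at Q Q'
  rw [← Ks_interior] at Q Q'
  have hK := Ks_convex hB s
  generalize q 1 = t at *
  generalize q 2 = a1 at *
  generalize q 3 = a2 at *
  generalize q 4 = b1 at *
  generalize q 5 = b2 at *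
  generalize q 6 = c1 at *
  generalize q' 1 = t' at *
  generalize q' 2 = a1' at *
  generalize q' 3 = a2' at *
  generalize q' 4 = b1' at *
  generalize q' 5 = b2' at *
  generalize q' 6 = c1' at *
  have ht : 0 < t := by linarith
  have ht' : 0 < t' := by linarith
  have N := Q.nconf hK (hne s) ht Q.2.2.2.2.1 Q.2.2.2.2.2.1 (by linarith)
  have N' := Q'.nconf hK (hne s) ht' Q'.2.2.2.2.1 Q'.2.2.2.2.2.1 (by linarith)
  obtain rfl : t = t' := le_antisymm (uniq_t hK N' N) (uniq_t hK N N')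
  obtain ⟨rfl, rfl, rfl, -⟩ := uniq_lev N N'
  rcases eq_or_lt_of_le hqd with h | h
  · exact ⟨s, t, a1, a2, b1, b2, c1, ht, h, Q⟩
  obtain ⟨A, A', Bb, B', R⟩ := Q
  obtain ⟨Ax, Ax', Bbx, Bx', Rx⟩ := Q'
  have hd : 0 < a1' + b1' - (a1 + b1) := by linarith
  obtain ⟨σ, hσ⟩ : ∃ σ, σ = (2 * c1 + t - (a1 + b1)) / (a1' + b1' - (a1 + b1)) := ⟨_, rfl⟩
  have s0 : 0 ≤ σ := by rw [hσ]; exact div_nonneg (by linarith) hd.le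
  have s1 : σ ≤ 1 := by rw [hσ, div_le_one hd]; linarith
  have s2 : σ * (a1' + b1' - (a1 + b1)) = 2 * c1 + t - (a1 + b1) := by
    rw [hσ]; exact div_mul_cancel₀ _ hd.ne'
  refine ⟨s, t, (1 - σ) * a1 + σ * a1', a2, (1 - σ) * b1 + σ * b1', b2, c1, ht,
    by linear_combination s2, ?_, ?_, ?_, ?_, R⟩
  · exact conv_mem hK A Ax σ s0 s1 (by ring) (by ring)
  · exact conv_mem hK A' Ax' σ s0 s1 (by ring) (by ring)
  · exact conv_mem hK Bb Bbx σ s0 s1 (by ring) (by ring)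
  · exact conv_mem hK B' Bx' σ s0 s1 (by ring) (by ring)

lemma body_good {B : Set (ℝ × ℝ)} (hB : Convex ℝ B) (hc : IsCompact B)
    (hi : (interior B).Nonempty) : Good B := by
  obtain ⟨s, t, a1, a2, b1, b2, c1, ht, hd, Q⟩ := exists_hexagon hB hc hi
  obtain ⟨T, hT⟩ := exists_Ks s
  apply Good.map T
  have hK := Ks_convex hB s
  have hcK := Ks_compact hc s
  have hiK : (interior (Ks B s)).Nonempty := by
    obtain ⟨z, hz⟩ := hi
    rw [Ks_interior, hT]
    exact ⟨T.symm z, by simpa using hz⟩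
  rw [← hT]
  generalize Ks B s = K at *
  have N := Q.nconf hK hiK ht Q.2.2.2.2.1 Q.2.2.2.2.2.1 (by linarith)
  obtain ⟨-, A, A', Bb, B', C, C', hba, Tp, Bo, M⟩ := N
  obtain ⟨-, -, -, -, -, -, NC, NC', -⟩ := Q
  obtain ⟨nA, nA'⟩ := notInt_chord hK (κ := 1) ht (by simp) A A' (by
    intro x e he h h'
    have := Tp _ _ h h'
    linarith)
  obtain ⟨nB, nB'⟩ := notInt_chord hK (κ := -1) ht (by simp) Bb B' (by
    intro x e he h h'
    have := Bo _ _ h h'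
    linarith)
  obtain ⟨Ψ, hΨ⟩ := exists_aff t (a1 - c1) 0 ((a2 - b2) / 2) (c1 + t) ((a2 + b2) / 2) (by
    have : 0 < t * ((a2 - b2) / 2) := mul_pos ht (by linarith)
    rw [mul_zero, sub_zero]
    exact this.ne')
  apply Good.map Ψ
  have w0 : Ψ (1, 0) = (c1 + 2 * t, (a2 + b2) / 2) := by rw [hΨ]; ext <;> simp <;> ring
  have w1 : Ψ (0, 1) = (a1 + t, a2) := by rw [hΨ]; ext <;> simp <;> ring
  have w2 : Ψ (-1, 1) = (a1, a2) := by rw [hΨ]; ext <;> simp <;> ring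
  have w3 : Ψ (-1, 0) = (c1, (a2 + b2) / 2) := by rw [hΨ]; ext <;> simp
  have w4 : Ψ (0, -1) = (b1, b2) := by
    rw [hΨ]; ext <;> simp
    · linarith
    · ring
  have w5 : Ψ (1, -1) = (b1 + t, b2) := by
    rw [hΨ]; ext <;> simp
    · linarith
    · ring
  have hcv := conv_preimage Ψ hK
  have hne : (interior {z | Ψ z ∈ K}).Nonempty := by
    obtain ⟨z, hz⟩ := hiK
    rw [int_preimage]
    exact ⟨Ψ.symm z, by simpa using hz⟩
  have sp : ∀ p q, Ψ (p, q) ∉ interior K → Supp {z | Ψ z ∈ K} p q := by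
    intro p q h
    apply supp_of_notMem hcv hne
    rw [int_preimage]
    exact h
  refine hex_good ⟨hcv, ⟨?_, ?_, ?_, ?_, ?_, ?_⟩, sp _ _ ?_, sp _ _ ?_, sp _ _ ?_, sp _ _ ?_, sp _ _ ?_,
    sp _ _ ?_⟩ (comp_preimage Ψ hcK)
  · simpa only [Set.mem_ofPred_eq, w0] using C'
  · simpa only [Set.mem_ofPred_eq, w1] using A'
  · simpa only [Set.mem_ofPred_eq, w2] using A
  · simpa only [Set.mem_ofPred_eq, w3] using C
  · simpa only [Set.mem_ofPred_eq, w4] using Bb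
  · simpa only [Set.mem_ofPred_eq, w5] using B'
  · rw [w0]; exact NC'
  · rw [w1]; exact nA'
  · rw [w2]; exact nA
  · rw [w3]; exact NC
  · rw [w4]; exact nB
  · rw [w5]; exact nB'

theorem stmt_1 (B : Set (ℝ × ℝ)) (hB : IsConvexBody B) :
    ∃ (T : ℝ × ℝ ≃ᵃ[ℝ] ℝ × ℝ) (c : ℝ × ℝ) (l : ℝ),
      1 ≤ l ∧ l ≤ 117 / 70 ∧
      T '' sevenGon ⊆ B ∧ B ⊆ AffineMap.homothety c l '' (T '' sevenGon) :=
  (body_good hB.1 hB.2.1 hB.2.2).final
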